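/- Let q ≥ 2, n ≥ 2, and gcd(d,q) = 1, and let o_n = (O,0^n) be the generalized prefer-opposite sequence. Then the n-words occurring as contiguous windows of o_n are exactly all of A^n except the q−1 constant words 1^n, 2^n, …, (q−1)^n, and each occurring n-word occurs exactly once. -/

import Mathlib

/-!
View `n`-words as the edges of the de Bruijn graph whose vertices are the `(n-1)`-words. The greedy
sequence is a trail in this graph with first edge the loop `0^n`, so in- and out-degrees along it
are balanced except at its two ends. The structure `Inv` collects what holds for every partial
sequence; `Inv.step` shows that one greedy step preserves it.

* The trail can only halt at `0^(n-1)` (`Inv.lastN_eq`): at any other end vertex, all `q` out-edges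
  used would force `q + 1` in-edges. So the final trail is closed and uses every edge out of
  `0^(n-1)`.
* For `a ≠ 0` the loop `a^n` is never used: it is the least preferred edge out of `a^(n-1)`, so
  before taking it the trail has left `a^(n-1)` by the `q - 1` other edges and hence entered it
  `q` times, although only `q - 1` in-edges are not loops.
* Suppose all non-loop edges out of `a^(n-1)` are used. By balance (`in_of_out`) all its non-loop
  in-edges are used. An edge `v a` with `v` ending in `a` is the least preferred one out of `v`,
  so if it is used, all edges out of `v` are. Going backwards along such edges, all edges out of
  vertices ending in `a`, and by balance all edges into them, are used, except possibly the loop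
  `a^n` (`full_of_const`). In particular `(a+d)^(n-1) a` is used; as `a` is the last but one choice
  after `a + d`, all non-loop edges out of `(a+d)^(n-1)` are used (`const_step`).
* Starting from `a = 0`, this reaches every digit, because `d` is a unit modulo `q`.
-/

namespace PaperDB

/-- The last `s` entries of `l`. -/
def lastN {α : Type*} (s : ℕ) (l : List α) : List α := l.drop (l.length - s)

/-- The digit appended by the greedy rule, if any: the most preferred digit `c`
(according to the preference function `P`, evaluated at the last `s` digits,
`P x 0` being the most preferred digit) such that the `n`-window created by
appending `c` has not yet occurred as a contiguous subword. -/
def nextDigit (q s n : ℕ) (P : List (ZMod q) → Fin q → ZMod q)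
    (l : List (ZMod q)) : Option (ZMod q) :=
  ((List.finRange q).map (fun i => P (lastN s l) i)).find?
    (fun c => !decide ((lastN (n - 1) l ++ [c]) <:+: l))

/-- Fuel-bounded greedy extension. -/
def greedyAux (q s n : ℕ) (P : List (ZMod q) → Fin q → ZMod q) :
    ℕ → List (ZMod q) → List (ZMod q)
  | 0, l => l
  | f + 1, l =>
    match nextDigit q s n P l with
    | none => l
    | some c => greedyAux q s n P f (l ++ [c])

/-- The greedy sequence `(P, I)`: fuel `q ^ n` provably suffices for the
construction to halt, since every `n`-word occurs at most once. -/
def greedy (q s n : ℕ) (P : List (ZMod q) → Fin q → ZMod q)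
    (I : List (ZMod q)) : List (ZMod q) :=
  greedyAux q s n P (q ^ n) I

/-- The number of occurrences of `w` as a length-`n` contiguous window of `l`. -/
def windowCount (q n : ℕ) (w l : List (ZMod q)) : ℕ :=
  ((List.range (l.length + 1 - n)).filter
    (fun i => decide ((l.drop i).take n = w))).length

/-- `P` is a preference function (of span `s`): it assigns to every `s`-word a
permutation of the alphabet `ZMod q`. -/
def IsPrefFun (q s : ℕ) (P : List (ZMod q) → Fin q → ZMod q) : Prop :=
  ∀ x : List (ZMod q), x.length = s → Function.Bijective (P x)

/-- The generalized prefer-opposite preference function `O^{(q,d)}`, of span 1: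
`O_j(a) = a + j·d (mod q)` for `j = 1,…,q`; the `Fin q`-index `j` denotes column `j+1`. -/
def OprefL (q d : ℕ) : List (ZMod q) → Fin q → ZMod q :=
  fun x j => x.headI + (((j : ℕ) + 1 : ℕ) : ZMod q) * (d : ZMod q)

/-- The generalized prefer-opposite sequence `o_n = (O, 0^n)`. -/
def oSeq (q n d : ℕ) : List (ZMod q) :=
  greedy q 1 n (OprefL q d) (List.replicate n 0)

/-! ### Suffixes and windows of lists -/

section Lists

variable {α : Type*}

theorem length_lastN {s : ℕ} {l : List α} (h : s ≤ l.length) : (lastN s l).length = s := by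
  simp [lastN]; omega

theorem lastN_suffix (s : ℕ) (l : List α) : lastN s l <:+ l := List.drop_suffix _ _

theorem eq_lastN_of_suffix {t l : List α} (h : t <:+ l) : t = lastN t.length l := by
  obtain ⟨r, rfl⟩ := h
  simp [lastN]

theorem lastN_lastN {s t : ℕ} {l : List α} (hst : s ≤ t) (h : t ≤ l.length) :
    lastN s (lastN t l) = lastN s l := by
  simp only [lastN, List.drop_drop, List.length_drop]
  congr 1
  omega

theorem lastN_one_concat (u : List α) (a : α) : lastN 1 (u ++ [a]) = [a] := by
  simp [lastN]

theorem lastN_concat {m : ℕ} {l : List α} (c : α) (h : m ≤ l.length) :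
    lastN m (l ++ [c]) = (lastN m l ++ [c]).tail := by
  have h2 : (lastN m l ++ [c]).tail <:+ l ++ [c] := by
    refine (List.tail_suffix _).trans ?_
    obtain ⟨r, hr⟩ := lastN_suffix m l
    exact ⟨r, by rw [← List.append_assoc, hr]⟩
  rw [eq_lastN_of_suffix h2]
  simp [length_lastN h]

/-- Appending one digit creates exactly one new window of length `m + 1`. -/
theorem infix_concat_iff_lastN {m : ℕ} {w l : List α} {c : α} (hw : w.length = m + 1) :
    w <:+: l ++ [c] ↔ w = lastN m l ++ [c] ∨ w <:+: l := by
  rw [List.infix_concat_iff, List.suffix_concat_iff]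
  constructor
  · rintro ((rfl | ⟨t, rfl, ht⟩) | h)
    · simp at hw
    · left
      have := eq_lastN_of_suffix ht
      simp at hw
      rw [hw] at this
      rw [← this]
    · exact Or.inr h
  · rintro (rfl | h)
    · exact Or.inl (Or.inr ⟨_, rfl, lastN_suffix _ _⟩)
    · exact Or.inr h

theorem replicate_concat (m : ℕ) (a : α) :
    List.replicate m a ++ [a] = List.replicate (m + 1) a := by
  rw [List.replicate_succ']

end Lists

theorem windowCount_concat {q m : ℕ} {w l : List (ZMod q)} (c : ZMod q) (h : m ≤ l.length) :
    windowCount q (m + 1) w (l ++ [c]) =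
      windowCount q (m + 1) w l + if w = lastN m l ++ [c] then 1 else 0 := by
  unfold windowCount
  have e1 : (l ++ [c]).length + 1 - (m + 1) = (l.length + 1 - (m + 1)) + 1 := by
    simp; omega
  rw [e1, List.range_succ, List.filter_append, List.length_append]
  congr 1
  · congr 1
    apply List.filter_congr
    intro i hi
    simp only [List.mem_range] at hi
    rw [List.drop_append_of_le_length (by omega), List.take_append_of_le_length]
    simp; omega
  · have e2 : ((l ++ [c]).drop (l.length + 1 - (m + 1))).take (m + 1) = lastN m l ++ [c] := by
      rw [List.drop_append_of_le_length (by omega), List.take_of_length_le]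
      · simp [lastN]
      · simp; omega
    rw [List.filter_singleton, e2]
    by_cases hw : w = lastN m l ++ [c]
    · simp [hw]
    · simp [hw, Ne.symm hw]

/-! ### The greedy rule and degrees in the de Bruijn graph -/

section Greedy

variable {q : ℕ}

/-- `O_q(a) = a`: repeating the last digit is the least preferred choice. -/
theorem Opref_last {d : ℕ} (a : ZMod q) (j : Fin q) (hj : j.1 + 1 = q) :
    OprefL q d [a] j = a := by
  simp only [OprefL, hj]; simp

/-- `O_{q-1}(a + d) = a`: the last but one choice subtracts `d`. -/
theorem Opref_penult {d : ℕ} (a : ZMod q) (j : Fin q) (hj : j.1 + 2 = q) :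
    OprefL q d [a + d] j = a := by
  have : (((j : ℕ) + 1 : ℕ) : ZMod q) = -1 := by
    have h : (((j : ℕ) + 2 : ℕ) : ZMod q) = 0 := by rw [hj]; simp
    push_cast at h ⊢
    linear_combination h
  simp only [OprefL, this]; simp

theorem nextDigit_eq_some {d m : ℕ} {l : List (ZMod q)} {c : ZMod q}
    (h : nextDigit q 1 (m + 1) (OprefL q d) l = some c) :
    ¬ lastN m l ++ [c] <:+: l ∧ ∃ i, c = OprefL q d (lastN 1 l) i ∧
      ∀ j < i, lastN m l ++ [OprefL q d (lastN 1 l) j] <:+: l := by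
  rw [nextDigit, List.find?_eq_some_iff_getElem] at h
  obtain ⟨h1, i, hi, h2, h3⟩ := h
  simp only [List.length_map, List.length_finRange] at hi
  refine ⟨by simpa using h1, ⟨i, hi⟩, by simpa using h2.symm, ?_⟩
  intro j hj
  have := h3 j.1 hj
  simpa using this

variable [NeZero q]

/-- The number of `(|v| + 1)`-windows of `l` of the form `x v`, that is, the number of edges
into the vertex `v` of the de Bruijn graph traversed by `l`. -/
def inDeg (v l : List (ZMod q)) : ℕ := (Finset.univ.filter fun x => x :: v <:+: l).card

/-- The number of `(|v| + 1)`-windows of `l` of the form `v x`, that is, the number of edges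
out of the vertex `v` of the de Bruijn graph traversed by `l`. -/
def outDeg (v l : List (ZMod q)) : ℕ := (Finset.univ.filter fun x => v ++ [x] <:+: l).card

/-- The properties of the partial sequences `l` built by the greedy rule from `0^(m+1)`, for
words of length `n = m + 1`. -/
structure Inv (q m d : ℕ) [NeZero q] (l : List (ZMod q)) : Prop where
  len : m + 1 ≤ l.length
  /-- no `n`-word occurs twice -/
  count : ∀ w : List (ZMod q), w.length = m + 1 →
    windowCount q (m + 1) w l = if w <:+: l then 1 else 0
  /-- the number of occurring `n`-words determines the length -/
  card : (Finset.univ.filter fun f : Fin (m + 1) → ZMod q => List.ofFn f <:+: l).card + m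
    = l.length
  /-- degree balance along a trail from `0^m` to the last `m` digits -/
  bal : ∀ v : List (ZMod q), v.length = m →
    inDeg v l + (if v = List.replicate m 0 then 1 else 0) =
      outDeg v l + (if v = lastN m l then 1 else 0)
  /-- an edge out of `v` is used only after all edges preferred to it, `0^n` being excepted -/
  pref : ∀ v : List (ZMod q), v.length = m → ∀ i j : Fin q, i < j →
    v ++ [OprefL q d (lastN 1 v) j] <:+: l →
    v ++ [OprefL q d (lastN 1 v) j] ≠ List.replicate (m + 1) 0 →
    v ++ [OprefL q d (lastN 1 v) i] <:+: l
  const : ∀ a : ZMod q, a ≠ 0 → ¬ List.replicate (m + 1) a <:+: l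

theorem Opref_bijective {d : ℕ} (hd : Nat.Coprime d q) (x : List (ZMod q)) :
    Function.Bijective (OprefL q d x) := by
  have hu : IsUnit (d : ZMod q) := (ZMod.isUnit_iff_coprime d q).2 hd
  have hinj : Function.Injective (OprefL q d x) := by
    intro i j hij
    have h1 := hu.mul_right_cancel (add_left_cancel hij)
    push_cast at h1
    have h2 := add_right_cancel h1
    rw [ZMod.natCast_eq_natCast_iff'] at h2
    rw [Nat.mod_eq_of_lt i.2, Nat.mod_eq_of_lt j.2] at h2
    exact Fin.ext h2
  refine (Fintype.bijective_iff_injective_and_card _).2 ⟨hinj, ?_⟩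
  simp [ZMod.card]

theorem nextDigit_eq_none {d m : ℕ} (hd : Nat.Coprime d q) {l : List (ZMod q)}
    (h : nextDigit q 1 (m + 1) (OprefL q d) l = none) (x : ZMod q) :
    lastN m l ++ [x] <:+: l := by
  obtain ⟨i, rfl⟩ := (Opref_bijective hd (lastN 1 l)).2 x
  simp only [nextDigit, List.find?_eq_none] at h
  have := h (OprefL q d (lastN 1 l) i) (List.mem_map.2 ⟨i, List.mem_finRange i, rfl⟩)
  simpa using this

theorem outDeg_concat {m : ℕ} {v l : List (ZMod q)} {c : ZMod q} (hv : v.length = m)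
    (hnew : ¬ lastN m l ++ [c] <:+: l) :
    outDeg v (l ++ [c]) = outDeg v l + if v = lastN m l then 1 else 0 := by
  unfold outDeg
  have hx : ∀ x : ZMod q, v ++ [x] <:+: l ++ [c] ↔
      ((v = lastN m l ∧ x = c) ∨ v ++ [x] <:+: l) := fun x => by
    rw [infix_concat_iff_lastN (m := m) (by simp [hv])]
    rw [List.append_singleton_inj]
  simp only [hx]
  split_ifs with h
  · subst h
    simp only [true_and]
    rw [Finset.filter_or, Finset.filter_eq' , if_pos (Finset.mem_univ _),
      Finset.card_union_of_disjoint]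
    · simp [add_comm]
    · simpa using hnew
  · simp [h]

theorem inDeg_concat {m : ℕ} {v l : List (ZMod q)} {c : ZMod q} (hv : v.length = m)
    (hl : m ≤ l.length) (hnew : ¬ lastN m l ++ [c] <:+: l) :
    inDeg v (l ++ [c]) = inDeg v l + if v = lastN m (l ++ [c]) then 1 else 0 := by
  unfold inDeg
  rw [lastN_concat c hl]
  obtain ⟨b, t, hbt⟩ : ∃ b t, lastN m l ++ [c] = b :: t := List.exists_cons_of_ne_nil (by simp)
  have hx : ∀ x : ZMod q, x :: v <:+: l ++ [c] ↔
      ((v = t ∧ x = b) ∨ x :: v <:+: l) := fun x => by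
    rw [infix_concat_iff_lastN (m := m) (by simp [hv]), hbt, List.cons.injEq, and_comm (a := x = b)]
  rw [hbt] at hnew ⊢
  simp only [hx, List.tail_cons]
  split_ifs with h
  · subst h
    simp only [true_and]
    rw [Finset.filter_or, Finset.filter_eq', if_pos (Finset.mem_univ _),
      Finset.card_union_of_disjoint]
    · simp [add_comm]
    · simpa using hnew
  · simp [h]

/-! ### Partial greedy sequences -/

theorem Inv.start {m d : ℕ} : Inv q m d (List.replicate (m + 1) 0) := by
  have key : ∀ w : List (ZMod q), w.length = m + 1 →
      (w <:+: List.replicate (m + 1) 0 ↔ w = List.replicate (m + 1) 0) := by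
    intro w hw
    constructor
    · intro h; exact h.eq_of_length (by simp [hw])
    · rintro rfl; exact List.infix_rfl
  constructor
  · simp
  · intro w hw
    simp only [key w hw]
    unfold windowCount
    simp [List.range_succ, List.filter_singleton]
    by_cases h : w = List.replicate (m + 1) 0
    · simp [h]
    · simp [h, Ne.symm h]
  · have : (Finset.univ.filter fun f : Fin (m + 1) → ZMod q =>
        List.ofFn f <:+: List.replicate (m + 1) 0) = {fun _ => 0} := by
      ext f
      simp only [Finset.mem_filter, Finset.mem_univ, true_and, Finset.mem_singleton]
      rw [key _ (by simp), ← List.ofFn_const, List.ofFn_injective.eq_iff]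
    rw [this]; simp [add_comm]
  · intro v hv
    have e1 : lastN m (List.replicate (m + 1) (0 : ZMod q)) = List.replicate m 0 := by
      simp [lastN]
    have e2 : inDeg v (List.replicate (m + 1) (0 : ZMod q)) =
        if v = List.replicate m 0 then 1 else 0 := by
      unfold inDeg
      have hx : ∀ x : ZMod q, x :: v <:+: List.replicate (m + 1) 0 ↔
          x = 0 ∧ v = List.replicate m 0 := fun x => by
        rw [key _ (by simp [hv]), List.replicate_succ, List.cons.injEq]
      simp only [hx]
      split_ifs with h <;> simp [h, Finset.filter_eq']
    have e3 : outDeg v (List.replicate (m + 1) (0 : ZMod q)) =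
        if v = List.replicate m 0 then 1 else 0 := by
      unfold outDeg
      have hx : ∀ x : ZMod q, v ++ [x] <:+: List.replicate (m + 1) 0 ↔
          v = List.replicate m 0 ∧ x = 0 := fun x => by
        rw [key _ (by simp [hv]), List.replicate_succ', List.append_singleton_inj]
      simp only [hx]
      split_ifs with h <;> simp [h, Finset.filter_eq']
    rw [e1, e2, e3]
  · intro v hv i j _ h h'
    exact absurd ((key _ (by simp [hv])).1 h) h'
  · intro a ha h
    rw [key _ (by simp)] at h
    simp [List.replicate_succ] at h
    exact ha h.1

theorem Inv.step {m d : ℕ} (hm : 1 ≤ m) (hd : Nat.Coprime d q) {l : List (ZMod q)} {c : ZMod q}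
    (I : Inv q m d l) (h : nextDigit q 1 (m + 1) (OprefL q d) l = some c) :
    Inv q m d (l ++ [c]) := by
  obtain ⟨hnew, i₀, hc, hpre⟩ := nextDigit_eq_some h
  have hl : m ≤ l.length := by have := I.len; omega
  have hlast : (lastN m l).length = m := length_lastN hl
  constructor
  · have := I.len; simp; omega
  · intro w hw
    rw [windowCount_concat c hl, I.count w hw]
    simp only [infix_concat_iff_lastN hw]
    by_cases h1 : w = lastN m l ++ [c]
    · subst h1; simp [hnew]
    · simp [h1]
  · obtain ⟨g, hg⟩ : ∃ g : Fin (m + 1) → ZMod q, List.ofFn g = lastN m l ++ [c] := by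
      have : (lastN m l ++ [c]).length = m + 1 := by simp [hlast]
      rw [← this]
      exact ⟨_, List.ofFn_get _⟩
    have hx : ∀ f : Fin (m + 1) → ZMod q, List.ofFn f <:+: l ++ [c] ↔
        (f = g ∨ List.ofFn f <:+: l) := by
      intro f
      rw [infix_concat_iff_lastN (m := m) (by simp), ← hg, List.ofFn_injective.eq_iff]
    simp only [hx]
    rw [Finset.filter_or, Finset.filter_eq', if_pos (Finset.mem_univ _),
      Finset.card_union_of_disjoint]
    · have := I.card
      rw [Finset.card_singleton, List.length_append, List.length_singleton]
      omega
    · simp only [Finset.disjoint_singleton_left, Finset.mem_filter, Finset.mem_univ, true_and]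
      rwa [hg]
  · intro v hv
    rw [outDeg_concat hv hnew, inDeg_concat hv hl hnew]
    have := I.bal v hv
    omega
  · intro v hv i j hij h1 h2
    rw [infix_concat_iff_lastN (m := m) (by simp [hv])] at h1 ⊢
    right
    rcases h1 with h1 | h1
    · obtain ⟨hv', hj⟩ := List.append_singleton_inj.1 h1
      have e : lastN 1 v = lastN 1 l := by rw [hv', lastN_lastN hm hl]
      rw [e] at hj ⊢
      have : j = i₀ := (Opref_bijective hd _).1 (hj.trans hc)
      subst this
      rw [hv']
      exact hpre i hij
    · exact I.pref v hv i j hij h1 h2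
  · intro a ha h1
    rw [infix_concat_iff_lastN (m := m) (by simp)] at h1
    rcases h1 with h1 | h1
    swap
    · exact I.const a ha h1
    rw [← replicate_concat, List.append_singleton_inj] at h1
    obtain ⟨hv, rfl⟩ := h1
    -- `a` is the least preferred digit after `a`, so all other edges out of `a^m` are used
    have e : lastN 1 l = [a] := by
      rw [← lastN_lastN hm hl, ← hv]
      obtain ⟨k, rfl⟩ : ∃ k, m = k + 1 := ⟨m - 1, by omega⟩
      rw [List.replicate_succ', lastN_one_concat]
    have hq : 0 < q := Nat.pos_of_ne_zero (NeZero.ne q)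
    have hi : i₀ = ⟨q - 1, by omega⟩ := by
      apply (Opref_bijective hd (lastN 1 l)).1
      rw [← hc, e, Opref_last]
      simp; omega
    have hout : q ≤ outDeg (List.replicate m a) l + 1 := by
      have : (Finset.univ.erase a).card ≤ outDeg (List.replicate m a) l := by
        apply Finset.card_le_card
        intro x hx
        obtain ⟨i, rfl⟩ := (Opref_bijective hd (lastN 1 l)).2 x
        simp only [Finset.mem_filter, Finset.mem_univ, true_and]
        rw [hv]
        apply hpre
        rw [lt_iff_le_and_ne]
        refine ⟨?_, ?_⟩
        · rw [hi, Fin.le_def]; have := i.2; simp; omega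
        · rintro rfl
          simp [← hc] at hx
      rw [Finset.card_erase_of_mem (Finset.mem_univ _), Finset.card_univ, ZMod.card] at this
      omega
    have hb := I.bal (List.replicate m a) (by simp)
    rw [if_pos hv, if_neg] at hb
    swap
    · intro h0
      obtain ⟨k, rfl⟩ : ∃ k, m = k + 1 := ⟨m - 1, by omega⟩
      simp [List.replicate_succ] at h0
      exact ha h0.1
    have hall : (Finset.univ.filter fun x => x :: List.replicate m a <:+: l) = Finset.univ := by
      rw [← Finset.card_eq_iff_eq_univ, ZMod.card]
      apply le_antisymm
      · exact (Finset.card_le_univ _).trans (by simp [ZMod.card])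
      · change q ≤ inDeg _ _
        omega
    have := Finset.mem_univ a
    rw [← hall] at this
    apply I.const a ha
    simpa [List.replicate_succ] using this

theorem greedyAux_spec {m d : ℕ} (hm : 1 ≤ m) (hd : Nat.Coprime d q) (f : ℕ)
    {l : List (ZMod q)} (I : Inv q m d l) :
    Inv q m d (greedyAux q 1 (m + 1) (OprefL q d) f l) ∧
      (nextDigit q 1 (m + 1) (OprefL q d) (greedyAux q 1 (m + 1) (OprefL q d) f l) = none ∨
        (greedyAux q 1 (m + 1) (OprefL q d) f l).length = l.length + f) := by
  induction f generalizing l with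
  | zero => exact ⟨I, Or.inr rfl⟩
  | succ f ih =>
    rw [greedyAux]
    split
    · rename_i h
      exact ⟨I, Or.inl h⟩
    · rename_i c h
      obtain ⟨h1, h2⟩ := ih (I.step hm hd h)
      refine ⟨h1, h2.imp_right fun h3 => ?_⟩
      rw [h3]; simp; omega

/-- The fuel `q ^ n` does not run out before the greedy rule halts: otherwise there would be
`q ^ n + 1` distinct `n`-words. -/
theorem oSeq_spec {m d : ℕ} (hm : 1 ≤ m) (hd : Nat.Coprime d q) :
    Inv q m d (oSeq q (m + 1) d) ∧
      ∀ x, lastN m (oSeq q (m + 1) d) ++ [x] <:+: oSeq q (m + 1) d := by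
  obtain ⟨h1, h2⟩ := greedyAux_spec hm hd (q ^ (m + 1)) (Inv.start (q := q) (m := m) (d := d))
  refine ⟨h1, nextDigit_eq_none hd ?_⟩
  rcases h2 with h2 | h2
  · exact h2
  · exfalso
    have h3 := h1.card
    rw [h2] at h3
    have h4 := Finset.card_le_univ (Finset.univ.filter fun f : Fin (m + 1) → ZMod q =>
      List.ofFn f <:+: greedyAux q 1 (m + 1) (OprefL q d) (q ^ (m + 1)) (List.replicate (m + 1) 0))
    rw [Fintype.card_fun, ZMod.card, Fintype.card_fin] at h4
    simp only [List.length_replicate] at h3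
    omega

/-! ### The closed trail -/

/-- When the greedy rule halts, the trail is closed: it has returned to `0^m`. -/
theorem Inv.lastN_eq {m d : ℕ} {l : List (ZMod q)} (I : Inv q m d l)
    (hall : ∀ x, lastN m l ++ [x] <:+: l) : lastN m l = List.replicate m 0 := by
  by_contra hne
  have hl : m ≤ l.length := by have := I.len; omega
  have hb := I.bal (lastN m l) (length_lastN hl)
  have h1 : outDeg (lastN m l) l = q := by
    unfold outDeg
    rw [Finset.filter_true_of_mem (fun x _ => hall x), Finset.card_univ, ZMod.card]
  have h2 : inDeg (lastN m l) l ≤ q := by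
    unfold inDeg
    exact (Finset.card_le_univ _).trans (by simp [ZMod.card])
  simp only [if_neg hne, if_true] at hb
  omega

/-- In a closed trail, if all edges out of `w` are used, with the possible exception of the loop
`a^n` at `w = a^m`, then so are all edges into `w`, with the same exception. -/
theorem in_of_out {m : ℕ} {l w : List (ZMod q)} (hw : w.length = m)
    (hbal : inDeg w l = outDeg w l) (a : ZMod q)
    (h : ∀ x, w ++ [x] ≠ List.replicate (m + 1) a → w ++ [x] <:+: l)
    (x : ZMod q) (hx : x :: w ≠ List.replicate (m + 1) a) : x :: w <:+: l := by
  unfold inDeg outDeg at hbal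
  by_cases hwa : w = List.replicate m a
  · subst hwa
    have hsub : Finset.univ.erase a ⊆
        Finset.univ.filter fun x => List.replicate m a ++ [x] <:+: l := by
      intro y hy
      simp only [Finset.mem_filter, Finset.mem_univ, true_and]
      apply h
      rw [← replicate_concat, Ne, List.append_singleton_inj]
      simpa using hy
    have hxa : x ≠ a := by
      rintro rfl
      exact hx (by rw [List.replicate_succ])
    by_contra hcon
    by_cases hloop : List.replicate (m + 1) a <:+: l
    · have h1 : (Finset.univ.filter fun x => List.replicate m a ++ [x] <:+: l) = Finset.univ := by
        ext y
        simp only [Finset.mem_filter, Finset.mem_univ, true_and, iff_true]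
        by_cases hy : y = a
        · subst hy; rwa [replicate_concat]
        · have := hsub (Finset.mem_erase.2 ⟨hy, Finset.mem_univ _⟩)
          simpa using this
      rw [h1, Finset.card_univ, Finset.card_eq_iff_eq_univ] at hbal
      have := Finset.mem_univ x
      rw [← hbal] at this
      simp at this
      exact hcon this
    · have h2 : (Finset.univ.filter fun y => y :: List.replicate m a <:+: l) ⊆
          (Finset.univ.erase a).erase x := by
        intro y hy
        simp only [Finset.mem_filter, Finset.mem_univ, true_and] at hy
        simp only [Finset.mem_erase, Finset.mem_univ, and_true]
        constructor
        · rintro rfl; exact hcon hy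
        · rintro rfl; exact hloop (by rwa [List.replicate_succ])
      have h3 := Finset.card_le_card h2
      have h4 := Finset.card_le_card hsub
      have h5 := Finset.card_erase_lt_of_mem
        (Finset.mem_erase.2 ⟨hxa, Finset.mem_univ x⟩ : x ∈ Finset.univ.erase a)
      omega
  · have h1 : (Finset.univ.filter fun x => w ++ [x] <:+: l) = Finset.univ := by
      ext y
      simp only [Finset.mem_filter, Finset.mem_univ, true_and, iff_true]
      apply h
      rw [← replicate_concat, Ne, List.append_singleton_inj]
      exact fun h => hwa h.1
    rw [h1, Finset.card_univ, Finset.card_eq_iff_eq_univ] at hbal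
    have := Finset.mem_univ x
    rw [← hbal] at this
    simpa using this

/-- If the edges `a^m x` with `x ≠ a` are all used, then every edge out of a vertex ending in `a`
is used, except possibly the loop `a^n`. The induction follows backwards the edges that repeat
the digit `a`, which are the least preferred ones: using one of them forces all edges with the
same source to be used. -/
theorem full_of_const {m d : ℕ} (hd : Nat.Coprime d q) {l : List (ZMod q)}
    (I : Inv q m d l) (hbal : ∀ w : List (ZMod q), w.length = m → inDeg w l = outDeg w l)
    (a : ZMod q) (ha : ∀ x, x ≠ a → List.replicate m a ++ [x] <:+: l) (u : List (ZMod q)) :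
    ∀ k, u.length + (k + 1) = m → ∀ x,
      (u ++ List.replicate (k + 1) a) ++ [x] ≠ List.replicate (m + 1) a →
      (u ++ List.replicate (k + 1) a) ++ [x] <:+: l := by
  have hconst : ∀ x, List.replicate m a ++ [x] ≠ List.replicate (m + 1) a →
      List.replicate m a ++ [x] <:+: l := by
    intro x hx
    apply ha
    rintro rfl
    exact hx (replicate_concat _ _)
  induction u with
  | nil =>
    intro k hk x hx
    simp only [List.length_nil, zero_add] at hk
    subst hk
    simp only [List.nil_append] at hx ⊢
    exact hconst x hx
  | cons y u ih =>
    intro k hk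
    simp only [List.length_cons] at hk
    have hvlen : ((y :: u) ++ List.replicate (k + 1) a).length = m := by simp; omega
    by_cases hv : (y :: u) ++ List.replicate (k + 1) a = List.replicate m a
    · rw [hv]; exact hconst
    intro x _
    have hshift : ((y :: u) ++ List.replicate (k + 1) a) ++ [a] =
        y :: (u ++ List.replicate (k + 1 + 1) a) := by
      rw [← replicate_concat (k + 1)]; simp
    have hne : ((y :: u) ++ List.replicate (k + 1) a) ++ [a] ≠ List.replicate (m + 1) a := by
      rw [← replicate_concat m, Ne, List.append_singleton_inj]
      exact fun h => hv h.1
    have hva : ((y :: u) ++ List.replicate (k + 1) a) ++ [a] <:+: l := by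
      have hwlen : (u ++ List.replicate (k + 1 + 1) a).length = m := by simp; omega
      rw [hshift] at hne ⊢
      exact in_of_out hwlen (hbal _ hwlen) a (ih (k + 1) (by omega)) y hne
    have hlast : lastN 1 ((y :: u) ++ List.replicate (k + 1) a) = [a] := by
      rw [← replicate_concat, ← List.append_assoc, lastN_one_concat]
    have hq : 0 < q := Nat.pos_of_ne_zero (NeZero.ne q)
    obtain ⟨i, hi⟩ := (Opref_bijective hd [a]).2 x
    have hj := Opref_last (d := d) a ⟨q - 1, by omega⟩ (by simp; omega)
    by_cases hij : i = ⟨q - 1, by omega⟩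
    · rw [hij, hj] at hi
      rw [← hi]; exact hva
    · have hlt : i < ⟨q - 1, by omega⟩ := by
        rw [lt_iff_le_and_ne]
        refine ⟨?_, hij⟩
        rw [Fin.le_def]; have := i.2; simp; omega
      have := I.pref _ hvlen i _ hlt
      rw [hlast, hj, hi] at this
      apply this hva
      by_cases h0 : a = 0
      · subst h0; exact hne
      · rw [← replicate_concat m, Ne, List.append_singleton_inj]
        exact fun h => h0 h.2

/-- The hypothesis of `full_of_const` passes from `a` to `a + d`: the edge `(a+d)^m a` enters a
vertex ending in `a`, and `a` is the last but one choice after the digit `a + d`. -/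
theorem const_step {m d : ℕ} (hm : 1 ≤ m) (hq : 2 ≤ q) (hd : Nat.Coprime d q)
    {l : List (ZMod q)} (I : Inv q m d l)
    (hbal : ∀ w : List (ZMod q), w.length = m → inDeg w l = outDeg w l)
    (a : ZMod q) (ha : ∀ x, x ≠ a → List.replicate m a ++ [x] <:+: l) :
    ∀ x, x ≠ a + d → List.replicate m (a + d) ++ [x] <:+: l := by
  have : Fact (1 < q) := ⟨hq⟩
  have hd0 : (d : ZMod q) ≠ 0 := ((ZMod.isUnit_iff_coprime d q).2 hd).ne_zero
  have had : a + d ≠ a := by simpa using hd0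
  obtain ⟨k, rfl⟩ : ∃ k, m = k + 1 := ⟨m - 1, by omega⟩
  have hwlen : (List.replicate k (a + d) ++ List.replicate (0 + 1) a).length = k + 1 := by simp
  have hin := in_of_out hwlen (hbal _ hwlen) a
    (full_of_const hd I hbal a ha (List.replicate k (a + d)) 0 (by simp)) (a + d)
    (by
      rw [List.replicate_succ (n := k + 1)]
      intro h
      exact had (List.cons.inj h).1)
  have hva : List.replicate (k + 1) (a + d) ++ [a] <:+: l := by
    simpa [List.replicate_succ] using hin
  intro x hx
  have hlast : lastN 1 (List.replicate (k + 1) (a + (d : ZMod q))) = [a + d] := by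
    rw [← replicate_concat, lastN_one_concat]
  obtain ⟨i, hi⟩ := (Opref_bijective hd [a + d]).2 x
  have hj := Opref_penult (d := d) a ⟨q - 2, by omega⟩ (by simp; omega)
  by_cases hij : i = ⟨q - 2, by omega⟩
  · rw [hij, hj] at hi
    rw [← hi]; exact hva
  · have hne : i.1 + 1 ≠ q := by
      intro h
      rw [Opref_last _ i h] at hi
      exact hx hi.symm
    have hlt : i < ⟨q - 2, by omega⟩ := by
      have h1 : i.1 ≠ q - 2 := fun h => hij (Fin.ext h)
      rw [Fin.lt_def]; have := i.2; simp; omega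
    have := I.pref (List.replicate (k + 1) (a + d)) (by simp) i _ hlt
    rw [hlast, hj, hi] at this
    apply this hva
    rw [← replicate_concat (k + 1), Ne, List.append_singleton_inj]
    rintro ⟨h1, h2⟩
    rw [List.replicate_succ, List.replicate_succ] at h1
    exact had ((List.cons.inj h1).1.trans h2.symm)

end Greedy


/-- For `gcd(d,q) = 1`, the generalized prefer-opposite
sequence `o_n = (O,0^n)` is a de Bruijn sequence missing exactly the constant
words `1^n,…,(q-1)^n`: no nonzero constant `n`-word occurs, and every other
`n`-word occurs exactly once as a contiguous window. -/
theorem oSeq_missing_words (q n d : ℕ) (hq : 2 ≤ q) (hn : 2 ≤ n)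
    (hd : Nat.Coprime d q) :
    (∀ a : ZMod q, a ≠ 0 → ¬ (List.replicate n a <:+: oSeq q n d)) ∧
    (∀ w : List (ZMod q), w.length = n →
      (∀ a : ZMod q, a ≠ 0 → w ≠ List.replicate n a) →
      windowCount q n w (oSeq q n d) = 1) := by
  have : NeZero q := ⟨by omega⟩
  obtain ⟨m, rfl⟩ : ∃ m, n = m + 1 := ⟨n - 1, by omega⟩
  have hm : 1 ≤ m := by omega
  obtain ⟨I, hall⟩ := oSeq_spec (q := q) hm hd
  refine ⟨I.const, fun w hw hwc => ?_⟩
  rw [I.count w hw]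
  generalize oSeq q (m + 1) d = l at I hall
  have hlast := I.lastN_eq hall
  have hbal : ∀ v : List (ZMod q), v.length = m → inDeg v l = outDeg v l := by
    intro v hv
    have := I.bal v hv
    rw [hlast] at this
    omega
  have hconst : ∀ i : ℕ, ∀ x, x ≠ (i : ZMod q) * d →
      List.replicate m ((i : ZMod q) * d) ++ [x] <:+: l := by
    intro i
    induction i with
    | zero =>
      intro x _
      have := hall x
      rw [hlast] at this
      simpa using this
    | succ i ih =>
      have := const_step hm hq hd I hbal _ ih
      rw [Nat.cast_succ, add_one_mul]
      exact this
  -- `w = u a x`, where `a` is a multiple of the unit `d`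
  rcases List.eq_nil_or_concat w with rfl | ⟨v, x, rfl⟩
  · simp at hw
  rcases List.eq_nil_or_concat v with rfl | ⟨u, a, rfl⟩
  · simp at hw; omega
  obtain ⟨i, hi⟩ := (Opref_bijective hd [0]).2 a
  simp only [OprefL, List.headI_cons, zero_add] at hi
  simp only [List.concat_eq_append] at *
  rw [if_pos]
  by_cases hwa : (u ++ [a]) ++ [x] = List.replicate (m + 1) a
  · by_cases ha : a = 0
    · subst ha
      rw [hwa, ← replicate_concat, ← hlast]
      exact hall 0
    · exact absurd hwa (hwc a ha)
  · have := full_of_const hd I hbal a (by rw [← hi]; exact hconst _) u 0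
      (by simp at hw; omega) x
    exact this hwa
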